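/- Let (X,{T^t}_{t∈ℝ}) be a minimal ℝ-flow and let π:(X,{T^t})→(Y,{T^t}) be a factor map onto a minimal equicontinuous ℝ-flow with R_π = RP(X,ℝ) (so that Y is the maximal equicontinuous factor of X). Then for each t ∈ ℝ∖{0}, the discrete system (X,T^t) is minimal if and only if (Y,T^t) is minimal. -/

import Mathlib

/-- The regionally proximal relation of an `ℝ`-flow `φ` on a metric space `X`:
`(x,y) ∈ RP(X,ℝ)` iff for every `ε > 0` there are `x', y' ∈ X` and `t ∈ ℝ` with
`dist x x' < ε`, `dist y y' < ε` and `dist (T^t x') (T^t y') < ε`. -/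
def RPFlow {X : Type*} [MetricSpace X] (φ : ℝ → X → X) : Set (X × X) :=
  {p | ∀ ε > 0, ∃ x' y' : X, ∃ t : ℝ,
    dist p.1 x' < ε ∧ dist p.2 y' < ε ∧ dist (φ t x') (φ t y') < ε}

/-! Let `H` be a cocompact subgroup of the abelian group `G` acting minimally on `X` (here `ℤ t` in
`ℝ`), and let `M` be a minimal set of the action of `H`. Each `g : G` either preserves `M` or moves
it off itself, so the translates of `M` are indexed by the quotient of `G` by the closed stabilizer
`S ⊇ H` of `M`. This quotient is compact, so by minimality of `X` the translates cover `X`, and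
sending the points of `g +ᵥ M` to the class of `g` defines a continuous map `f : X → G ⧸ S`. The
difference `f x - f y` is invariant under `G` and vanishes on the diagonal, hence on every
regionally proximal pair. So `M` is a union of fibres of `π`, and if `Y` is `H`-minimal then
`M` maps onto `Y`, which forces `M = X`. -/

open Set Uniformity Topology AddAction
open scoped Pointwise

section MinimalSet

/-- A subset of `X` is a minimal set of the action of `H` if it is minimal among the nonempty closed
invariant subsets. -/
def IsMinimalSet (H : Type*) {X : Type*} [TopologicalSpace X] [VAdd H X] (M : Set X) : Prop :=
  Minimal (fun N : Set X ↦ (IsClosed N ∧ N.Nonempty) ∧ ∀ h : H, h +ᵥ N ⊆ N) M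

theorem exists_isMinimalSet (H X : Type*) [TopologicalSpace X] [CompactSpace X] [Nonempty X]
    [VAdd H X] : ∃ M : Set X, IsMinimalSet H M := by
  refine zorn_superset _ fun c hc hchain ↦ ?_
  rcases c.eq_empty_or_nonempty with rfl | hne
  · exact ⟨univ, ⟨⟨isClosed_univ, univ_nonempty⟩, fun _ ↦ subset_univ _⟩, by simp⟩
  have hclosed : ∀ N ∈ c, IsClosed N := fun N hN ↦ (hc hN).1.1
  have : Nonempty c := hne.to_subtype
  have hdirected : DirectedOn (· ⊇ ·) c := IsChain.directedOn hchain.symm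
  refine ⟨⋂₀ c, ⟨⟨isClosed_sInter hclosed, ?_⟩, fun h ↦ ?_⟩, fun N ↦ sInter_subset_of_mem⟩
  · exact IsCompact.nonempty_sInter_of_directed_nonempty_isCompact_isClosed hdirected
      (fun N hN ↦ (hc hN).1.2) (fun N hN ↦ (hclosed N hN).isCompact) hclosed
  · exact subset_sInter fun N hN ↦
      (vadd_set_mono (sInter_subset_of_mem hN)).trans ((hc hN).2 h)

theorem isMinimal_of_isMinimalSet_univ {H X : Type*} [AddMonoid H] [TopologicalSpace X]
    [AddAction H X] [ContinuousConstVAdd H X] (huniv : IsMinimalSet H (univ : Set X)) :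
    IsMinimal H X := by
  refine (isMinimal_iff_isClosed_vadd_invariant H).2 fun N hN hinv ↦ ?_
  exact N.eq_empty_or_nonempty.imp_right fun hne ↦
    univ_subset_iff.1 (huniv.2 ⟨⟨hN, hne⟩, hinv⟩ (subset_univ N))

end MinimalSet

theorem compactSpace_quotient_of_le {G : Type*} [AddGroup G] [TopologicalSpace G]
    {H K : AddSubgroup G} (hle : H ≤ K) [CompactSpace (G ⧸ H)] : CompactSpace (G ⧸ K) := by
  have hmap : AddSubgroup.quotientMapOfLE hle ∘ QuotientAddGroup.mk = QuotientAddGroup.mk := rfl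
  refine Function.Surjective.compactSpace (f := AddSubgroup.quotientMapOfLE hle) ?_ ?_
  · rw [(QuotientAddGroup.isQuotientMap_mk H).continuous_iff, hmap]
    exact QuotientAddGroup.continuous_mk
  · exact .of_comp (hmap ▸ QuotientAddGroup.mk_surjective)

section Translates

variable {G X : Type*} [AddGroup G] [TopologicalSpace G] [IsTopologicalAddGroup G]
  [TopologicalSpace X] [AddAction G X] [ContinuousVAdd G X] {M : Set X}

theorem isClosed_setOf_mem_ofQuotientStabilizer (hM : IsClosed M) :
    IsClosed {p : X × (G ⧸ stabilizer G M) | p.1 ∈ ofQuotientStabilizer G M p.2} := by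
  have hquot : IsQuotientMap (Prod.map id (QuotientAddGroup.mk (s := stabilizer G M))) :=
    (IsOpenQuotientMap.id.prodMap QuotientAddGroup.isOpenQuotientMap_mk).isQuotientMap (X := X × G)
  rw [← hquot.isClosed_preimage]
  have : IsClosed ((fun p : X × G ↦ -p.2 +ᵥ p.1) ⁻¹' M) := hM.preimage (by fun_prop)
  simpa only [preimage_ofPred_eq, Prod.map_fst, Prod.map_snd, id, ofQuotientStabilizer_mk,
    mem_vadd_set_iff_neg_vadd_mem] using! this

theorem exists_mem_ofQuotientStabilizer [IsMinimal G X] (hM : IsClosed M) (hne : M.Nonempty)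
    [CompactSpace (G ⧸ stabilizer G M)] (x : X) :
    ∃ c : G ⧸ stabilizer G M, x ∈ ofQuotientStabilizer G M c := by
  let A : Set X := {x | ∃ c : G ⧸ stabilizer G M, x ∈ ofQuotientStabilizer G M c}
  have hA : IsClosed A := by
    convert! isClosedMap_fst_of_compactSpace _ (isClosed_setOf_mem_ofQuotientStabilizer (G := G) hM)
    ext x
    simp [A]
  have hA_inv : ∀ g : G, g +ᵥ A ⊆ A := by
    rintro g _ ⟨y, ⟨c, hc⟩, rfl⟩
    refine ⟨g +ᵥ c, ?_⟩
    rw [ofQuotientStabilizer_vadd]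
    exact vadd_mem_vadd_set hc
  obtain ⟨m, hm⟩ := hne
  have hA_ne : A.Nonempty := ⟨m, QuotientAddGroup.mk 0, by rwa [ofQuotientStabilizer_mk, zero_vadd]⟩
  have hA_univ : A = univ :=
    (eq_empty_or_univ_of_vadd_invariant_closed G hA hA_inv).resolve_left hA_ne.ne_empty
  exact hA_univ.ge (mem_univ x)

end Translates

namespace IsMinimalSet

theorem isClosed {H X : Type*} [TopologicalSpace X] [VAdd H X] {M : Set X}
    (hM : IsMinimalSet H M) : IsClosed M :=
  hM.1.1.1

theorem nonempty {H X : Type*} [TopologicalSpace X] [VAdd H X] {M : Set X}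
    (hM : IsMinimalSet H M) : M.Nonempty :=
  hM.1.1.2

section AddGroup

variable {G X : Type*} [AddGroup G] [TopologicalSpace X] [AddAction G X] {H : AddSubgroup G}
  {M : Set X}

theorem vadd_mem (hM : IsMinimalSet H M) {h : G} (hh : h ∈ H) {m : X} (hm : m ∈ M) :
    h +ᵥ m ∈ M :=
  hM.1.2 ⟨h, hh⟩ (vadd_mem_vadd_set hm)

theorem le_stabilizer (hM : IsMinimalSet H M) : H ≤ stabilizer G M := by
  refine fun h hh ↦ mem_stabilizer_set.2 fun x ↦ ⟨fun hx ↦ ?_, hM.vadd_mem hh⟩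
  simpa only [neg_vadd_vadd] using hM.vadd_mem (neg_mem hh) hx

end AddGroup

variable {G X : Type*} [AddCommGroup G] [TopologicalSpace X] [AddAction G X] {H : AddSubgroup G}
  {M : Set X}

section ContinuousConstVAdd

variable [ContinuousConstVAdd G X]

/- The points of `M` sent into `M` by `g` form a closed `H`-invariant set, because `g` commutes with
`H`. -/
theorem vadd_mem_of_vadd_mem (hM : IsMinimalSet H M) {g : G} {m : X} (hm : m ∈ M)
    (hgm : g +ᵥ m ∈ M) {x : X} (hx : x ∈ M) : g +ᵥ x ∈ M := by
  let N : Set X := M ∩ (g +ᵥ ·) ⁻¹' M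
  have hN : IsClosed N := hM.isClosed.inter (hM.isClosed.preimage (continuous_const_vadd g))
  have hN_inv : ∀ h : H, h +ᵥ N ⊆ N := by
    rintro h _ ⟨y, ⟨hy, hgy⟩, rfl⟩
    refine ⟨hM.vadd_mem h.2 hy, ?_⟩
    rw [mem_preimage, vadd_comm]
    exact hM.vadd_mem h.2 hgy
  exact (hM.2 ⟨⟨hN, m, hm, hgm⟩, hN_inv⟩ inter_subset_left hx).2

theorem mem_stabilizer_iff (hM : IsMinimalSet H M) {g : G} {m : X} (hm : m ∈ M) :
    g ∈ stabilizer G M ↔ g +ᵥ m ∈ M := by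
  refine ⟨fun hg ↦ (mem_stabilizer_set.1 hg m).2 hm, fun hgm ↦ mem_stabilizer_set.2 fun x ↦
    ⟨fun hx ↦ ?_, hM.vadd_mem_of_vadd_mem hm hgm⟩⟩
  have hm' : -g +ᵥ (g +ᵥ m) ∈ M := by rwa [neg_vadd_vadd]
  simpa only [neg_vadd_vadd] using hM.vadd_mem_of_vadd_mem hgm hm' hx

theorem coe_eq_coe_of_mem_vadd (hM : IsMinimalSet H M) {g k : G} {x : X} (hg : x ∈ g +ᵥ M)
    (hk : x ∈ k +ᵥ M) : (g : G ⧸ stabilizer G M) = k := by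
  rw [mem_vadd_set_iff_neg_vadd_mem] at hg hk
  rw [QuotientAddGroup.eq, ← neg_mem_iff, hM.mem_stabilizer_iff hg, vadd_vadd]
  simpa using hk

end ContinuousConstVAdd

variable [TopologicalSpace G] [ContinuousVAdd G X]

theorem isClosed_stabilizer (hM : IsMinimalSet H M) : IsClosed (stabilizer G M : Set G) := by
  obtain ⟨m, hm⟩ := hM.nonempty
  have : (stabilizer G M : Set G) = (· +ᵥ m) ⁻¹' M := ext fun g ↦ hM.mem_stabilizer_iff hm
  rw [this]
  exact hM.isClosed.preimage (by fun_prop)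

/- The map is continuous because its graph is closed and its codomain compact. -/
theorem exists_continuous_eq_coe_iff_mem_vadd [IsTopologicalAddGroup G] [IsMinimal G X]
    [CompactSpace (G ⧸ H)] (hM : IsMinimalSet H M) :
    ∃ f : X → G ⧸ stabilizer G M, Continuous f ∧ ∀ x (g : G), f x = g ↔ x ∈ g +ᵥ M := by
  have : CompactSpace (G ⧸ stabilizer G M) := compactSpace_quotient_of_le hM.le_stabilizer
  choose f hf using exists_mem_ofQuotientStabilizer (G := G) hM.isClosed hM.nonempty
  have hf_coe : ∀ x (g : G), f x = g ↔ x ∈ g +ᵥ M := by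
    intro x g
    obtain ⟨k, hk⟩ := QuotientAddGroup.mk_surjective (f x)
    have hkM : x ∈ k +ᵥ M := by simpa only [← hk, ofQuotientStabilizer_mk] using hf x
    refine ⟨fun hg ↦ ?_, fun hg ↦ hk ▸ hM.coe_eq_coe_of_mem_vadd hkM hg⟩
    simpa only [hg, ofQuotientStabilizer_mk] using hf x
  have hgraph : ∀ x c, x ∈ ofQuotientStabilizer G M c ↔ f x = c := by
    rintro x ⟨g⟩
    exact (hf_coe x g).symm
  refine ⟨f, continuous_iff_isClosed.2 fun C hC ↦ ?_, hf_coe⟩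
  convert! isClosedMap_fst_of_compactSpace _
    ((isClosed_setOf_mem_ofQuotientStabilizer (G := G) hM.isClosed).inter
      (hC.preimage continuous_snd))
  ext x
  simp [hgraph]

end IsMinimalSet

section RegionallyProximal

/-- The regionally proximal relation of an action of `G` on a uniform space `X`: the pairs that are
limits of pairs which some element of `G` moves arbitrarily close to the diagonal. -/
def regionallyProximal (G X : Type*) [VAdd G X] [UniformSpace X] : Set (X × X) :=
  {p | ∀ U ∈ 𝓤 X, p ∈ closure {q : X × X | ∃ g : G, g +ᵥ q ∈ U}}

variable {G X : Type*} [UniformSpace X] [CompactSpace X]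

theorem apply_eq_of_mem_regionallyProximal [VAdd G X] {Z : Type*} [TopologicalSpace Z] [T2Space Z]
    {D : X × X → Z} {z : Z} (hD : Continuous D) (hinv : ∀ (g : G) p, D (g +ᵥ p) = D p)
    (hdiag : ∀ x, D (x, x) = z) {p : X × X} (hp : p ∈ regionallyProximal G X) : D p = z := by
  by_contra hne
  obtain ⟨V, W, hV, hW, hpV, hzW, hVW⟩ := t2_separation hne
  have hW_unif : D ⁻¹' W ∈ 𝓤 X := by
    rw [← nhdsSet_diagonal_eq_uniformity, (hW.preimage hD).mem_nhdsSet]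
    rintro ⟨x, y⟩ hxy
    obtain rfl : x = y := hxy
    rwa [mem_preimage, hdiag]
  obtain ⟨q, hqV, g, hgq⟩ := mem_closure_iff.1 (hp _ hW_unif) _ (hV.preimage hD) hpV
  rw [mem_preimage, hinv] at hgq
  exact disjoint_left.1 hVW hqV hgq

theorem regionallyProximal_subset_of_vadd_eq_add {A : Type*} [AddCommGroup A] [TopologicalSpace A]
    [IsTopologicalAddGroup A] [T2Space A] [VAdd G X] {f : X → A} {χ : G → A} (hf : Continuous f)
    (hχ : ∀ g x, f (g +ᵥ x) = χ g + f x) :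
    regionallyProximal G X ⊆ {p | f p.1 = f p.2} := by
  intro p hp
  have hD : Continuous fun q : X × X ↦ f q.1 - f q.2 := by fun_prop
  refine sub_eq_zero.1 (apply_eq_of_mem_regionallyProximal (G := G) hD ?_ ?_ hp)
  · intro g q
    simp only [Prod.vadd_fst, Prod.vadd_snd, hχ, add_sub_add_left_eq_sub]
  · exact fun x ↦ sub_self (f x)

theorem IsMinimalSet.mem_of_mem_regionallyProximal [AddCommGroup G] [TopologicalSpace G]
    [IsTopologicalAddGroup G] [AddAction G X] [ContinuousVAdd G X] [IsMinimal G X]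
    {H : AddSubgroup G} [CompactSpace (G ⧸ H)] {M : Set X} (hM : IsMinimalSet H M) {x y : X}
    (hx : x ∈ M) (hxy : (x, y) ∈ regionallyProximal G X) : y ∈ M := by
  obtain ⟨f, hf, hfM⟩ := hM.exists_continuous_eq_coe_iff_mem_vadd (G := G)
  have := hM.isClosed_stabilizer
  have hf_vadd : ∀ (g : G) z, f (g +ᵥ z) = g + f z := by
    intro g z
    obtain ⟨k, hk⟩ := QuotientAddGroup.mk_surjective (f z)
    rw [← hk, ← QuotientAddGroup.mk_add, hfM, add_vadd, vadd_mem_vadd_set_iff, ← hfM, hk]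
  have hfM_zero : ∀ z, f z = (0 : G) ↔ z ∈ M := fun z ↦ by rw [hfM, zero_vadd]
  have hfxy : f x = f y := regionallyProximal_subset_of_vadd_eq_add hf hf_vadd hxy
  rwa [← hfM_zero, ← hfxy, hfM_zero]

end RegionallyProximal

theorem isMinimal_of_surjective {H X Y : Type*} [AddMonoid H] [TopologicalSpace X] [AddAction H X]
    [TopologicalSpace Y] [AddAction H Y] [IsMinimal H X] {π : X → Y} (hπ : Continuous π)
    (hsurj : Function.Surjective π) (hequiv : ∀ (h : H) x, π (h +ᵥ x) = h +ᵥ π x) :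
    IsMinimal H Y := by
  refine ⟨hsurj.forall.2 fun x ↦ ?_⟩
  have hdense : DenseRange fun h : H ↦ π (h +ᵥ x) := hsurj.denseRange.comp (denseRange_vadd H x) hπ
  simpa only [hequiv] using! hdense

theorem IsMinimalSet.image_eq_univ {H X Y : Type*} [AddMonoid H] [TopologicalSpace X]
    [CompactSpace X] [VAdd H X] [TopologicalSpace Y] [T2Space Y] [AddAction H Y] [IsMinimal H Y]
    {M : Set X} (hM : IsMinimalSet H M) {π : X → Y} (hπ : Continuous π)
    (hequiv : ∀ (h : H) x, π (h +ᵥ x) = h +ᵥ π x) : π '' M = univ := by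
  refine (eq_empty_or_univ_of_vadd_invariant_closed H (hM.isClosed.isCompact.image hπ).isClosed
    ?_).resolve_left (hM.nonempty.image π).ne_empty
  rintro h _ ⟨_, ⟨x, hx, rfl⟩, rfl⟩
  exact ⟨h +ᵥ x, hM.1.2 h (vadd_mem_vadd_set hx), hequiv h x⟩

theorem time_t_minimal_iff_minimal_on_max_equicontinuous_factor_general
    {G X Y : Type*} [AddCommGroup G] [TopologicalSpace G] [IsTopologicalAddGroup G]
    [UniformSpace X] [CompactSpace X] [AddAction G X] [ContinuousVAdd G X] [IsMinimal G X]
    (H : AddSubgroup G) [CompactSpace (G ⧸ H)] [TopologicalSpace Y] [T2Space Y] [AddAction H Y]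
    {π : X → Y} (hπ : Continuous π) (hsurj : Function.Surjective π)
    (hequiv : ∀ (h : H) x, π (h +ᵥ x) = h +ᵥ π x)
    (hfib : {p : X × X | π p.1 = π p.2} ⊆ regionallyProximal G X) :
    IsMinimal H X ↔ IsMinimal H Y := by
  refine ⟨fun _ ↦ isMinimal_of_surjective hπ hsurj hequiv, fun _ ↦ ?_⟩
  rcases isEmpty_or_nonempty X with _ | _
  · exact ⟨isEmptyElim⟩
  obtain ⟨M, hM⟩ := exists_isMinimalSet H X
  have hM_univ : M = univ := by
    refine eq_univ_of_forall fun y ↦ ?_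
    obtain ⟨x, hx, hxy⟩ := (hM.image_eq_univ hπ hequiv).ge (mem_univ (π y))
    exact hM.mem_of_mem_regionallyProximal hx (hfib hxy)
  exact isMinimal_of_isMinimalSet_univ (hM_univ ▸ hM)

section RealFlow

theorem compactSpace_quotient_zmultiples {t : ℝ} (ht : t ≠ 0) :
    CompactSpace (ℝ ⧸ AddSubgroup.zmultiples t) := by
  have : Fact (0 < |t|) := ⟨abs_pos.2 ht⟩
  rw [← zmultiples_abs]
  exact AddCircle.compactSpace |t|

theorem isMinimal_zmultiples_iff {G X : Type*} [AddGroup G] [TopologicalSpace X] [AddAction G X]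
    (t : G) : IsMinimal (AddSubgroup.zmultiples t) X ↔
      ∀ x : X, Dense (range fun n : ℤ ↦ (n • t) +ᵥ x) := by
  have horbit (x : X) : orbit (AddSubgroup.zmultiples t) x = range fun n : ℤ ↦ (n • t) +ᵥ x := by
    ext y
    simp only [mem_orbit_iff, mem_range, Subtype.exists, AddSubgroup.mem_zmultiples_iff,
      exists_prop, exists_exists_eq_and, AddSubgroup.mk_vadd]
  simp only [← horbit]
  exact ⟨fun h ↦ h.dense_orbit, fun h ↦ ⟨h⟩⟩

theorem rpFlow_eq_regionallyProximal {X : Type*} [MetricSpace X] [AddAction ℝ X] :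
    RPFlow (fun (t : ℝ) (x : X) ↦ t +ᵥ x) = regionallyProximal ℝ X := by
  ext p
  simp only [RPFlow, regionallyProximal, mem_ofPred_eq, Metric.mem_closure_iff]
  constructor
  · intro hp U hU ε hε
    obtain ⟨δ, hδ, hδU⟩ := Metric.mem_uniformity_dist.1 hU
    obtain ⟨x, y, t, hx, hy, hxy⟩ := hp (min ε δ) (lt_min hε hδ)
    exact ⟨(x, y), ⟨t, hδU (hxy.trans_le (min_le_right ε δ))⟩,
      max_lt (hx.trans_le (min_le_left ε δ)) (hy.trans_le (min_le_left ε δ))⟩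
  · intro hp ε hε
    obtain ⟨q, ⟨t, ht⟩, hq⟩ := hp _ (Metric.dist_mem_uniformity hε) ε hε
    exact ⟨q.1, q.2, t, (le_max_left _ _).trans_lt hq, (le_max_right _ _).trans_lt hq, ht⟩

end RealFlow

/-- Let `(X,{T^t})` be a minimal `ℝ`-flow and let `π : X → Y` be a factor map onto
a minimal equicontinuous `ℝ`-flow with `R_π = RP(X,ℝ)` (so `Y` is the maximal
equicontinuous factor of `X`). Then for each `t ≠ 0`, the discrete system
`(X,T^t)` is minimal iff `(Y,T^t)` is minimal. -/
theorem time_t_minimal_iff_minimal_on_max_equicontinuous_factor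
    {X Y : Type*} [MetricSpace X] [CompactSpace X] [MetricSpace Y] [CompactSpace Y]
    (φ : ℝ → X → X) (ψ : ℝ → Y → Y)
    (hφcont : Continuous fun p : ℝ × X => φ p.1 p.2)
    (hφ0 : ∀ x, φ 0 x = x) (hφadd : ∀ s t x, φ (s + t) x = φ s (φ t x))
    (hψcont : Continuous fun p : ℝ × Y => ψ p.1 p.2)
    (hψ0 : ∀ y, ψ 0 y = y) (hψadd : ∀ s t y, ψ (s + t) y = ψ s (ψ t y))
    (hXmin : ∀ x : X, Dense (Set.range fun t : ℝ => φ t x))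
    (hYmin : ∀ y : Y, Dense (Set.range fun t : ℝ => ψ t y))
    (hYeq : ∀ ε > 0, ∃ δ > 0, ∀ y₁ y₂ : Y, dist y₁ y₂ < δ →
      ∀ t : ℝ, dist (ψ t y₁) (ψ t y₂) < ε)
    (π : X → Y) (hπcont : Continuous π) (hπsurj : Function.Surjective π)
    (hπfac : ∀ (t : ℝ) (x : X), π (φ t x) = ψ t (π x))
    (hπfib : {p : X × X | π p.1 = π p.2} = RPFlow φ)
    (t : ℝ) (ht : t ≠ 0) :
    (∀ x : X, Dense (Set.range fun n : ℤ => φ (n * t) x)) ↔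
    (∀ y : Y, Dense (Set.range fun n : ℤ => ψ (n * t) y)) := by
  let _ : AddAction ℝ X := (Flow.mk φ hφcont hφadd hφ0).toAddAction
  let _ : AddAction ℝ Y := (Flow.mk ψ hψcont hψadd hψ0).toAddAction
  have : ContinuousVAdd ℝ X := ⟨hφcont⟩
  have : IsMinimal ℝ X := ⟨hXmin⟩
  have : CompactSpace (ℝ ⧸ AddSubgroup.zmultiples t) := compactSpace_quotient_zmultiples ht
  have hfib : {p : X × X | π p.1 = π p.2} ⊆ regionallyProximal ℝ X :=
    (hπfib.trans rpFlow_eq_regionallyProximal).subset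
  simpa only [isMinimal_zmultiples_iff, zsmul_eq_mul] using!
    time_t_minimal_iff_minimal_on_max_equicontinuous_factor_general
      (AddSubgroup.zmultiples t) hπcont hπsurj (fun s x ↦ hπfac s x) hfib
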